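/- Let n ≥ 5 and 2 ≤ k ≤ n−2 be integers, and let Ŝ = { ρ ∈ D_n : ρ·Ĉ^ch_{k,n} = Ĉ^ch_{k,n} } be the stabilizer of the dual checkboard collection. Then: if k and n are both even, Ŝ is the cyclic subgroup generated by σ^{n/2}; if k is odd and n is even, Ŝ is the subgroup generated by σ^{n/2} and σ^k ρ₀, where ρ₀(x) = (k−1)(n−1)/2 − x; and if n is odd, Ŝ is the subgroup generated by σ^k ρ₀ (in the last two cases (k−1)(n−1) is even, so ρ₀ is well defined). -/

import Mathlib

open Finset

/-- `(a,b,c,d)` is strictly cyclically ordered in `ℤ/nℤ`. -/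
def StrictCyclicOrd {n : ℕ} (a b c d : ZMod n) : Prop :=
  0 < (b - a).val ∧ (b - a).val < (c - a).val ∧ (c - a).val < (d - a).val

/-- `I` and `J` are weakly separated subsets of `ℤ/nℤ`. -/
def WeaklySep {n : ℕ} (I J : Finset (ZMod n)) : Prop :=
  ¬ ∃ a c b d : ZMod n, a ∈ I \ J ∧ c ∈ I \ J ∧ b ∈ J \ I ∧ d ∈ J \ I ∧
      StrictCyclicOrd a b c d

/-- The dihedral group `D_n`, realized as the subgroup of permutations of `ℤ/nℤ`
generated by `σ : i ↦ i + 1` and `τ : i ↦ 2 - i`. -/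
def dihedral (n : ℕ) : Subgroup (Equiv.Perm (ZMod n)) :=
  Subgroup.closure {Equiv.addRight (1 : ZMod n), Equiv.subLeft (2 : ZMod n)}

/-- The set `[m] = {1, …, m} ⊆ ℤ/nℤ` (with `[0] = ∅`). -/
def seg (n m : ℕ) : Finset (ZMod n) := (Finset.Icc 1 m).image (fun t : ℕ => (t : ZMod n))

/-- Rectangle label `I^rec_{i,j} = ([i+j]∖[i]) ∪ ([n]∖[n−k+j])`. -/
def Irec (k n i j : ℕ) : Finset (ZMod n) :=
  (seg n (i + j) \ seg n i) ∪ (seg n n \ seg n (n - k + j))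

/-- Checkboard label `I^ch_{i,j} = σ^{−⌈(i+j)/2⌉} I^rec_{i,j}`. -/
def Ich (k n i j : ℕ) : Finset (ZMod n) :=
  (Irec k n i j).image (fun x => x - (((i + j + 1) / 2 : ℕ) : ZMod n))

/-- Dual rectangle label `Î^rec_{i,j} = [i] ∪ ([k+j]∖[i+j])`. -/
def Drec (k n i j : ℕ) : Finset (ZMod n) :=
  seg n i ∪ (seg n (k + j) \ seg n (i + j))

/-- Dual checkboard label `Î^ch_{i,j} = σ^{−⌈(i+j)/2⌉} Î^rec_{i,j}`. -/
def Dch (k n i j : ℕ) : Finset (ZMod n) :=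
  (Drec k n i j).image (fun x => x - (((i + j + 1) / 2 : ℕ) : ZMod n))

/-- The rectangle collection `C^rec_{k,n}`. -/
def Crec (k n : ℕ) : Finset (Finset (ZMod n)) :=
  ((Finset.range (n - k + 1)) ×ˢ (Finset.range (k + 1))).image (fun p => Irec k n p.1 p.2)

/-- The checkboard collection `C^ch_{k,n}`. -/
def Cch (k n : ℕ) : Finset (Finset (ZMod n)) :=
  ((Finset.range (n - k + 1)) ×ˢ (Finset.range (k + 1))).image (fun p => Ich k n p.1 p.2)

/-- The dual rectangle collection `Ĉ^rec_{k,n}`. -/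
def CDrec (k n : ℕ) : Finset (Finset (ZMod n)) :=
  ((Finset.range (k + 1)) ×ˢ (Finset.range (n - k + 1))).image (fun p => Drec k n p.1 p.2)

/-- The dual checkboard collection `Ĉ^ch_{k,n}`. -/
def CDch (k n : ℕ) : Finset (Finset (ZMod n)) :=
  ((Finset.range (k + 1)) ×ˢ (Finset.range (n - k + 1))).image (fun p => Dch k n p.1 p.2)

/-- `C` is a weakly separated collection of `k`-subsets of `ℤ/nℤ`. -/
def IsWSColl (n k : ℕ) (C : Set (Finset (ZMod n))) : Prop :=
  (∀ I ∈ C, I.card = k) ∧ ∀ I ∈ C, ∀ J ∈ C, WeaklySep I J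

/-- `C` is a maximal weakly separated collection of `k`-subsets of `ℤ/nℤ`. -/
def IsMaxWSColl (n k : ℕ) (C : Set (Finset (ZMod n))) : Prop :=
  IsWSColl n k C ∧ ∀ C' : Set (Finset (ZMod n)), IsWSColl n k C' → C ⊆ C' → C' = C

def DD (k n i j : ℕ) [NeZero n] (a : ZMod n) : Finset (ZMod n) :=
  Finset.univ.filter (fun x => (x - a).val < i ∨ (i + j ≤ (x - a).val ∧ (x - a).val < k + j))

lemma mem_DD {k n i j : ℕ} [NeZero n] {a x : ZMod n} : x ∈ DD k n i j a ↔
    ((x - a).val < i ∨ (i + j ≤ (x - a).val ∧ (x - a).val < k + j)) := by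
  simp [DD]

lemma val_of {n : ℕ} [NeZero n] (y : ZMod n) (w : ℤ) (h : y = (w : ZMod n)) (h0 : 0 ≤ w)
    (h1 : w < n) : (y.val : ℤ) = w := by
  subst h
  rw [ZMod.val_intCast, Int.emod_eq_of_lt h0 h1]

lemma cast_small {n : ℕ} (x y : ℤ) (h : (x : ZMod n) = (y : ZMod n))
    (h1 : x - y < 2 * n) (h2 : y - x < 2 * n) : x = y ∨ x = y + n ∨ x = y - n := by
  rw [ZMod.intCast_eq_intCast_iff_dvd_sub] at h
  obtain ⟨q, hq⟩ := h
  have hq1 : q < 2 := by nlinarith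
  have hq2 : -2 < q := by nlinarith
  have : q = -1 ∨ q = 0 ∨ q = 1 := by omega
  rcases this with rfl | rfl | rfl <;> omega

lemma mem_seg {n m : ℕ} [NeZero n] (hm : m ≤ n) (x : ZMod n) :
    x ∈ seg n m ↔ (x - 1).val < m := by
  have hn : 0 < n := Nat.pos_of_ne_zero (NeZero.ne n)
  simp only [seg, Finset.mem_image, Finset.mem_Icc]
  constructor
  · rintro ⟨t, ⟨h1, h2⟩, rfl⟩
    have := val_of (n := n) ((t : ZMod n) - 1) ((t : ℤ) - 1) (by push_cast; rfl) (by omega) (by omega)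
    omega
  · intro h
    refine ⟨(x - 1).val + 1, ⟨by omega, by omega⟩, ?_⟩
    push_cast
    rw [ZMod.natCast_zmod_val]; ring

lemma Dch_eq {k n i j : ℕ} [NeZero n] (hk : k ≤ n) (hi : i ≤ k) (hj : j ≤ n - k) :
    Dch k n i j = DD k n i j (1 - (((i + j + 1) / 2 : ℕ) : ZMod n)) := by
  ext x
  rw [mem_DD]
  set c : ZMod n := (((i + j + 1) / 2 : ℕ) : ZMod n) with hc
  have h1 : x ∈ Dch k n i j ↔ x + c ∈ Drec k n i j := by
    simp only [Dch, Finset.mem_image]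
    constructor
    · rintro ⟨y, hy, rfl⟩
      simpa [← hc] using hy
    · intro h
      exact ⟨_, h, by simp [← hc]⟩
  rw [h1, Drec, Finset.mem_union, Finset.mem_sdiff, mem_seg (by omega), mem_seg (by omega),
    mem_seg (by omega)]
  have h2 : x + c - 1 = x - (1 - c) := by ring
  rw [h2]
  omega

lemma DD_rot {k n i j : ℕ} [NeZero n] (a d : ZMod n) :
    (DD k n i j a).image (Equiv.addRight d) = DD k n i j (a + d) := by
  ext x
  simp only [Finset.mem_image, mem_DD]
  constructor
  · rintro ⟨y, hy, rfl⟩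
    have : (Equiv.addRight d) y - (a + d) = y - a := by simp
    rwa [this]
  · intro h
    refine ⟨x - d, ?_, by simp⟩
    have : x - d - a = x - (a + d) := by ring
    rwa [this]

lemma DD_refl {k n i j : ℕ} [NeZero n] (hk : k ≤ n) (hi : i ≤ k) (hj : j ≤ n - k) (a c : ZMod n) :
    (DD k n i j a).image (Equiv.subLeft c) = DD k n (k - i) j (c - a - j - k + 1) := by
  have key : ∀ x : ZMod n, x ∈ DD k n (k - i) j (c - a - j - k + 1) ↔ c - x ∈ DD k n i j a := by
    intro x
    simp only [mem_DD]
    have hv := ZMod.val_lt (c - x - a)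
    have hx : x = c - a - ((c - x - a).val : ZMod n) := by
      rw [ZMod.natCast_zmod_val]; ring
    set v := (c - x - a).val
    by_cases hvk : v < j + k
    · have := val_of (n := n) (x - (c - a - j - k + 1)) ((j : ℤ) + k - 1 - v)
        (by rw [hx]; push_cast; ring) (by omega) (by omega)
      omega
    · have := val_of (n := n) (x - (c - a - j - k + 1)) ((n : ℤ) + j + k - 1 - v)
        (by rw [hx]; push_cast; simp; ring) (by omega) (by omega)
      omega
  ext x
  rw [key]
  simp only [Finset.mem_image]
  constructor
  · rintro ⟨y, hy, rfl⟩
    simpa using hy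
  · intro h
    exact ⟨_, h, by simp⟩

lemma DD_half {k n i j : ℕ} [NeZero n] (hk : k ≤ n) (hi : i ≤ k) (hj : j ≤ n - k) (a : ZMod n) :
    DD k n i j a = DD k n (k - i) (n - k - j) (a + i + j) := by
  ext x
  simp only [mem_DD]
  have hv := ZMod.val_lt (x - a)
  have hx : x = a + ((x - a).val : ZMod n) := by
    rw [ZMod.natCast_zmod_val]; ring
  set v := (x - a).val
  by_cases hvk : i + j ≤ v
  · have := val_of (n := n) (x - (a + i + j)) ((v : ℤ) - i - j)
      (by rw [hx]; push_cast; ring) (by omega) (by omega)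
    omega
  · have := val_of (n := n) (x - (a + i + j)) ((n : ℤ) + v - i - j)
      (by rw [hx]; push_cast; simp; ring) (by omega) (by omega)
    omega

/-- starts -/
lemma DD_start {k n i j : ℕ} [NeZero n] (hk : k ≤ n) (hi : i ≤ k) (hj : j ≤ n - k) (a x : ZMod n)
    (h1 : x ∈ DD k n i j a) (h2 : x - 1 ∉ DD k n i j a) : x = a ∨ x = a + i + j := by
  simp only [mem_DD] at h1 h2
  have hv := ZMod.val_lt (x - a)
  have hx : x = a + ((x - a).val : ZMod n) := by
    rw [ZMod.natCast_zmod_val]; ring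
  set v := (x - a).val
  by_cases h0 : v = 0
  · left; rw [hx, h0]; simp
  · have := val_of (n := n) (x - 1 - a) ((v : ℤ) - 1)
      (by rw [hx]; push_cast; ring) (by omega) (by omega)
    right
    have : v = i + j := by omega
    rw [hx, this]; push_cast; ring

lemma DD_uniq0 {k n i j i' j' : ℕ} [NeZero n] (hk : k + 2 ≤ n) (hi : 1 ≤ i) (hik : i < k)
    (hj : 1 ≤ j) (hjk : j < n - k) (hi' : i' ≤ k) (hj' : j' ≤ n - k) (a : ZMod n)
    (hs : i + j = i' + j')
    (h : DD k n i j a = DD k n i' j' a) : i' = i ∧ j' = j := by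
  have e1 : a + ((i : ℤ) : ZMod n) ∉ DD k n i j a := by
    have := val_of (n := n) (a + ((i : ℤ) : ZMod n) - a) i (by ring) (by omega) (by omega)
    rw [mem_DD]; omega
  have e2 : a + (((i : ℤ) - 1 : ℤ) : ZMod n) ∈ DD k n i j a := by
    have := val_of (n := n) (a + (((i : ℤ) - 1 : ℤ) : ZMod n) - a) ((i : ℤ) - 1) (by ring) (by omega) (by omega)
    rw [mem_DD]; omega
  rw [h, mem_DD] at e1 e2
  have := val_of (n := n) (a + ((i : ℤ) : ZMod n) - a) i (by ring) (by omega) (by omega)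
  have := val_of (n := n) (a + (((i : ℤ) - 1 : ℤ) : ZMod n) - a) ((i : ℤ) - 1) (by ring) (by omega) (by omega)
  omega

lemma DD_uniq {k n i j i' j' : ℕ} [NeZero n] (hk : k + 2 ≤ n) (hi : 1 ≤ i) (hik : i < k)
    (hj : 1 ≤ j) (hjk : j < n - k) (hi' : i' ≤ k) (hj' : j' ≤ n - k) (a a' : ZMod n)
    (h : DD k n i j a = DD k n i' j' a') :
    (a' = a ∧ i' = i ∧ j' = j) ∨ (a' = a + i + j ∧ i' = k - i ∧ j' = n - k - j) := by
  have s1 : a ∈ DD k n i j a := by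
    have := val_of (n := n) (a - a) 0 (by simp) (by omega) (by omega)
    rw [mem_DD]; omega
  have s2 : a - 1 ∉ DD k n i j a := by
    have := val_of (n := n) (a - 1 - a) ((n : ℤ) - 1) (by push_cast; simp) (by omega) (by omega)
    rw [mem_DD]; omega
  have s3 : a + i + j ∈ DD k n i j a := by
    have := val_of (n := n) (a + i + j - a) ((i : ℤ) + j) (by push_cast; ring) (by omega) (by omega)
    rw [mem_DD]; omega
  have s4 : a + i + j - 1 ∉ DD k n i j a := by
    have := val_of (n := n) (a + i + j - 1 - a) ((i : ℤ) + j - 1) (by push_cast; ring) (by omega) (by omega)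
    rw [mem_DD]; omega
  have hne : a ≠ a + i + j := by
    intro h0
    have h0' : (((i : ℤ) + j : ℤ) : ZMod n) = ((0 : ℤ) : ZMod n) := by
      push_cast; linear_combination -h0
    have := cast_small _ _ h0' (by omega) (by omega)
    omega
  have h0 := h
  rw [h] at s1 s2 s3 s4
  have t1 := DD_start (by omega) hi' hj' a' _ s1 s2
  have t2 := DD_start (by omega) hi' hj' a' _ s3 s4
  rcases t1 with t1 | t1 <;> rcases t2 with t2 | t2
  · exact absurd (t1.trans t2.symm) hne
  · left
    subst t1
    have h0' : (((i : ℤ) + j : ℤ) : ZMod n) = (((i' : ℤ) + j' : ℤ) : ZMod n) := by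
      push_cast; linear_combination t2
    have := cast_small _ _ h0' (by omega) (by omega)
    exact ⟨rfl, DD_uniq0 hk hi hik hj hjk hi' hj' a (by omega) h⟩
  · right
    subst t2
    have h0' : (((i : ℤ) + j + i' + j' : ℤ) : ZMod n) = ((n : ℤ) : ZMod n) := by
      push_cast; rw [ZMod.natCast_self]; linear_combination - t1
    have := cast_small _ _ h0' (by omega) (by omega)
    rw [DD_half (by omega) (by omega) (by omega) a] at h
    exact ⟨rfl, DD_uniq0 hk (by omega) (by omega) (by omega) (by omega) hi' hj' _ (by omega) h⟩
  · exact absurd (t1.trans t2.symm) hne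

lemma mem_CDch {k n : ℕ} [NeZero n] (hk : k ≤ n) (I : Finset (ZMod n)) :
    I ∈ CDch k n ↔ ∃ i j : ℕ, i ≤ k ∧ j ≤ n - k ∧
      DD k n i j (1 - (((i + j + 1) / 2 : ℕ) : ZMod n)) = I := by
  simp only [CDch, Finset.mem_image, Finset.mem_product, Finset.mem_range, Prod.exists]
  constructor
  · rintro ⟨i, j, ⟨h1, h2⟩, rfl⟩
    exact ⟨i, j, by omega, by omega, (Dch_eq hk (by omega) (by omega)).symm⟩
  · rintro ⟨i, j, h1, h2, rfl⟩
    exact ⟨i, j, ⟨by omega, by omega⟩, Dch_eq hk (by omega) (by omega)⟩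

lemma stab_of {n : ℕ} (C : Finset (Finset (ZMod n))) (ρ : Equiv.Perm (ZMod n))
    (h : ∀ I ∈ C, I.image ρ ∈ C) : C.image (fun I => I.image ρ) = C := by
  apply Finset.eq_of_subset_of_card_le
  · intro J hJ
    obtain ⟨I, hI, rfl⟩ := Finset.mem_image.1 hJ
    exact h I hI
  · rw [Finset.card_image_of_injective]
    exact Finset.image_injective ρ.injective

def Stab {n : ℕ} (C : Finset (Finset (ZMod n))) : Subgroup (Equiv.Perm (ZMod n)) where
  carrier := {ρ | ρ ∈ dihedral n ∧ C.image (fun I => I.image ρ) = C}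
  one_mem' := ⟨one_mem _, by simp⟩
  mul_mem' := by
    rintro a b ⟨ha, ha'⟩ ⟨hb, hb'⟩
    refine ⟨mul_mem ha hb, ?_⟩
    conv_rhs => rw [← ha', ← hb', Finset.image_image]
    apply Finset.image_congr
    intro I _
    simp [Finset.image_image]
  inv_mem' := by
    rintro a ⟨ha, ha'⟩
    refine ⟨inv_mem ha, ?_⟩
    conv_lhs => rw [← ha', Finset.image_image]
    conv_rhs => rw [← Finset.image_id (s := C)]
    apply Finset.image_congr
    intro I _
    ext x
    simp [Finset.image_image]

lemma addRight_pow' {n : ℕ} (m : ℕ) :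
    (Equiv.addRight (1 : ZMod n)) ^ m = Equiv.addRight (m : ZMod n) := by
  induction m with
  | zero => ext x; simp
  | succ m ih => rw [pow_succ, ih]; ext x; simp; ring

lemma pow_mul_sub {n : ℕ} (m : ℕ) (c : ZMod n) :
    (Equiv.addRight (1 : ZMod n)) ^ m * Equiv.subLeft c = Equiv.subLeft (c + m) := by
  rw [addRight_pow']; ext x; simp; ring

lemma rot_mem {n : ℕ} [NeZero n] (d : ZMod n) : Equiv.addRight d ∈ dihedral n := by
  have : Equiv.addRight d = (Equiv.addRight (1 : ZMod n)) ^ d.val := by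
    rw [addRight_pow', ZMod.natCast_zmod_val]
  rw [this]
  exact pow_mem (Subgroup.subset_closure (by simp)) _

lemma refl_mem {n : ℕ} [NeZero n] (c : ZMod n) : Equiv.subLeft c ∈ dihedral n := by
  have : Equiv.subLeft c = (Equiv.addRight (c - 2)) * (Equiv.subLeft (2 : ZMod n)) := by
    ext x; simp
  rw [this]
  exact mul_mem (rot_mem _) (Subgroup.subset_closure (by simp))

lemma dihedral_cases {n : ℕ} (ρ : Equiv.Perm (ZMod n)) (h : ρ ∈ dihedral n) :
    (∃ d, ρ = Equiv.addRight d) ∨ (∃ c, ρ = Equiv.subLeft c) := by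
  induction h using Subgroup.closure_induction with
  | mem x hx =>
    rcases hx with rfl | hx
    · exact Or.inl ⟨_, rfl⟩
    · exact Or.inr ⟨_, hx⟩
  | one => exact Or.inl ⟨0, by ext x; simp⟩
  | mul x y _ _ hx hy =>
    rcases hx with ⟨d, rfl⟩ | ⟨d, rfl⟩ <;> rcases hy with ⟨e, rfl⟩ | ⟨e, rfl⟩
    · exact Or.inl ⟨e + d, by ext x; simp <;> ring⟩
    · exact Or.inr ⟨e + d, by ext x; simp <;> ring⟩
    · exact Or.inr ⟨d - e, by ext x; simp <;> ring⟩
    · exact Or.inl ⟨d - e, by ext x; simp <;> ring⟩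
  | inv x _ hx =>
    rcases hx with ⟨d, rfl⟩ | ⟨d, rfl⟩
    · exact Or.inl ⟨-d, by rw [inv_eq_iff_mul_eq_one]; ext x; simp⟩
    · exact Or.inr ⟨d, by rw [inv_eq_iff_mul_eq_one]; ext x; simp⟩

lemma half_stab {k n : ℕ} [NeZero n] (hk : k ≤ n) (hn : n % 2 = 0) :
    Equiv.addRight ((n / 2 : ℕ) : ZMod n) ∈ Stab (CDch k n) := by
  refine ⟨rot_mem _, stab_of _ _ ?_⟩
  intro I hI
  rw [mem_CDch hk] at hI ⊢
  obtain ⟨i, j, hi, hj, rfl⟩ := hI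
  refine ⟨k - i, n - k - j, by omega, by omega, ?_⟩
  rw [DD_rot, DD_half hk hi hj]
  congr 1
  have : ((n : ℕ) : ZMod n) = 0 := ZMod.natCast_self n
  have e : (n : ℤ) + ((i + j + 1) / 2 : ℕ) = i + j + (n / 2 : ℕ) + ((k - i + (n - k - j) + 1) / 2 : ℕ) := by
    omega
  have e' := congrArg (Int.cast : ℤ → ZMod n) e
  try simp only [Int.cast_add, Int.cast_sub, Int.cast_neg, Int.cast_natCast, Int.cast_one] at e'
  try simp only [Int.cast_add, Int.cast_sub, Int.cast_neg, Int.cast_natCast, Int.cast_one]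
  linear_combination e' - this

lemma refl_stab_odd {k n : ℕ} [NeZero n] (hk : k ≤ n) (ho : k % 2 = 1) :
    Equiv.subLeft (((k + 1) / 2 : ℕ) : ZMod n) ∈ Stab (CDch k n) := by
  refine ⟨refl_mem _, stab_of _ _ ?_⟩
  intro I hI
  rw [mem_CDch hk] at hI ⊢
  obtain ⟨i, j, hi, hj, rfl⟩ := hI
  refine ⟨k - i, j, by omega, by omega, ?_⟩
  rw [DD_refl hk hi hj]
  congr 1
  have e : ((k + 1) / 2 : ℕ) + (((i + j + 1) / 2 : ℕ) : ℤ) + ((k - i + j + 1) / 2 : ℕ) = j + k + 1 := by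
    omega
  have e' := congrArg (Int.cast : ℤ → ZMod n) e
  try simp only [Int.cast_add, Int.cast_sub, Int.cast_neg, Int.cast_natCast, Int.cast_one] at e'
  try simp only [Int.cast_add, Int.cast_sub, Int.cast_neg, Int.cast_natCast, Int.cast_one]
  linear_combination -e'

lemma refl_stab_even {k n : ℕ} [NeZero n] (hk : k ≤ n) (ho : (n - k) % 2 = 1) :
    Equiv.subLeft (1 - ((n - k + 1) / 2 : ℕ) : ZMod n) ∈ Stab (CDch k n) := by
  refine ⟨refl_mem _, stab_of _ _ ?_⟩
  intro I hI
  rw [mem_CDch hk] at hI ⊢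
  obtain ⟨i, j, hi, hj, rfl⟩ := hI
  refine ⟨i, n - k - j, by omega, by omega, ?_⟩
  rw [DD_refl hk hi hj, DD_half hk (by omega) hj]
  have h1 : k - (k - i) = i := by omega
  rw [h1]
  congr 1
  have e : ((n - k + 1) / 2 : ℕ) - (((i + j + 1) / 2 : ℕ) : ℤ) - ((i + (n - k - j) + 1) / 2 : ℕ) = - i := by
    omega
  have e' := congrArg (Int.cast : ℤ → ZMod n) e
  try simp only [Int.cast_add, Int.cast_sub, Int.cast_neg, Int.cast_natCast, Int.cast_one, Nat.cast_sub hi] at e'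
  try simp only [Int.cast_add, Int.cast_sub, Int.cast_neg, Int.cast_natCast, Int.cast_one, Nat.cast_sub hi]
  linear_combination e'

lemma rot_nec {k n i j : ℕ} [NeZero n] (hk : k + 2 ≤ n) (hi : 1 ≤ i) (hik : i < k)
    (hj : 1 ≤ j) (hjk : j < n - k) (d : ZMod n) (h : Equiv.addRight d ∈ Stab (CDch k n)) :
    d = 0 ∨ d = ((((i + j + 1) / 2 : ℕ) - (i : ℤ) - j - ((n - i - j + 1) / 2 : ℕ) : ℤ) : ZMod n) := by
  have hm : (DD k n i j (1 - (((i + j + 1) / 2 : ℕ) : ZMod n))).image (Equiv.addRight d) ∈ CDch k n := by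
    rw [← h.2]
    exact Finset.mem_image_of_mem (fun I => Finset.image (Equiv.addRight d) I)
      ((mem_CDch (by omega) _).2 ⟨i, j, by omega, by omega, rfl⟩)
  rw [DD_rot, mem_CDch (by omega)] at hm
  obtain ⟨i', j', hi', hj', he⟩ := hm
  rcases DD_uniq hk hi hik hj hjk hi' hj' _ _ he.symm with ⟨e, rfl, rfl⟩ | ⟨e, rfl, rfl⟩
  · left; linear_combination -e
  · right
    have : k - i + (n - k - j) + 1 = n - i - j + 1 := by omega
    rw [this] at e
    try simp only [Int.cast_add, Int.cast_sub, Int.cast_neg, Int.cast_natCast, Int.cast_one] at e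
    try simp only [Int.cast_add, Int.cast_sub, Int.cast_neg, Int.cast_natCast, Int.cast_one]
    linear_combination -e

lemma refl_nec {k n i j : ℕ} [NeZero n] (hk : k + 2 ≤ n) (hi : 1 ≤ i) (hik : i < k)
    (hj : 1 ≤ j) (hjk : j < n - k) (c : ZMod n) (h : Equiv.subLeft c ∈ Stab (CDch k n)) :
    c = (((j : ℤ) + k + 1 - ((i + j + 1) / 2 : ℕ) - ((k - i + j + 1) / 2 : ℕ) : ℤ) : ZMod n) ∨
    c = ((1 + (i : ℤ) - ((i + j + 1) / 2 : ℕ) - ((i + (n - k - j) + 1) / 2 : ℕ) : ℤ) : ZMod n) := by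
  have hm : (DD k n i j (1 - (((i + j + 1) / 2 : ℕ) : ZMod n))).image (Equiv.subLeft c) ∈ CDch k n := by
    rw [← h.2]
    exact Finset.mem_image_of_mem (fun I => Finset.image (Equiv.subLeft c) I)
      ((mem_CDch (by omega) _).2 ⟨i, j, by omega, by omega, rfl⟩)
  rw [DD_refl (by omega) (by omega) (by omega), mem_CDch (by omega)] at hm
  obtain ⟨i', j', hi', hj', he⟩ := hm
  rcases DD_uniq hk (by omega) (by omega) hj hjk hi' hj' _ _ he.symm with ⟨e, rfl, rfl⟩ | ⟨e, rfl, rfl⟩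
  · left
    try simp only [Int.cast_add, Int.cast_sub, Int.cast_neg, Int.cast_natCast, Int.cast_one] at e
    try simp only [Int.cast_add, Int.cast_sub, Int.cast_neg, Int.cast_natCast, Int.cast_one]
    linear_combination -e
  · right
    have : k - (k - i) = i := by omega
    rw [this] at e
    try simp only [Int.cast_add, Int.cast_sub, Int.cast_neg, Int.cast_natCast, Int.cast_one, Nat.cast_sub hik.le] at e
    try simp only [Int.cast_add, Int.cast_sub, Int.cast_neg, Int.cast_natCast, Int.cast_one, Nat.cast_sub hik.le]
    linear_combination -e

lemma c0_odd {k n : ℕ} (hn : 1 ≤ n) (ho : k % 2 = 1) :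
    ((((k - 1) * (n - 1)) / 2 : ℕ) : ZMod n) + k = (((k + 1) / 2 : ℕ) : ZMod n) := by
  obtain ⟨m, rfl⟩ : ∃ m, k = 2 * m + 1 := ⟨k / 2, by omega⟩
  have h1 : (2 * m + 1 - 1) * (n - 1) / 2 = m * (n - 1) := by
    rw [Nat.add_sub_cancel, mul_assoc, Nat.mul_div_cancel_left _ (by norm_num)]
  have h2 : (2 * m + 1 + 1) / 2 = m + 1 := by omega
  rw [h1, h2]
  push_cast [Nat.cast_sub hn]
  rw [ZMod.natCast_self]; ring

lemma c0_even {k n : ℕ} (hk : 1 ≤ k) (hkn : k ≤ n) (ho : k % 2 = 0) (hn : n % 2 = 1) :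
    ((((k - 1) * (n - 1)) / 2 : ℕ) : ZMod n) + k = 1 - ((n - k + 1) / 2 : ℕ) := by
  obtain ⟨m, rfl⟩ : ∃ m, k = 2 * m := ⟨k / 2, by omega⟩
  obtain ⟨p, hp⟩ : ∃ p, n = 2 * p + 1 := ⟨n / 2, by omega⟩
  have h1 : (2 * m - 1) * (n - 1) / 2 = (2 * m - 1) * p := by
    have : n - 1 = 2 * p := by omega
    rw [this, mul_left_comm, Nat.mul_div_cancel_left _ (by norm_num)]
  have h2 : (n - 2 * m + 1) / 2 = p + 1 - m := by omega
  rw [h1, h2]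
  have h3 : (n : ZMod n) = 0 := ZMod.natCast_self n
  have h4 : (2 * (p : ZMod n) + 1) = 0 := by
    rw [← h3]; exact_mod_cast congrArg (Nat.cast : ℕ → ZMod n) hp.symm
  rw [Nat.cast_sub (by omega), Nat.cast_mul, Nat.cast_sub hk]
  push_cast
  linear_combination (m : ZMod n) * h4

lemma exists_three {k n : ℕ} (hn : 5 ≤ n) (hk : 2 ≤ k) (hkn : k + 2 ≤ n) :
    ∃ i j : ℕ, 1 ≤ i ∧ i < k ∧ 1 ≤ j ∧ j < n - k ∧ ((i = 1 ∧ j = 2) ∨ (i = 2 ∧ j = 1)) := by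
  by_cases h : k = 2
  · exact ⟨1, 2, by omega⟩
  · exact ⟨2, 1, by omega⟩

lemma rot_even {k n : ℕ} [NeZero n] (hk : 2 ≤ k) (hkn : k + 2 ≤ n)
    (hn : n % 2 = 0) (d : ZMod n) (h : Equiv.addRight d ∈ Stab (CDch k n)) :
    d = 0 ∨ d = ((n / 2 : ℕ) : ZMod n) := by
  rcases rot_nec (i := 1) (j := 1) hkn (by omega) (by omega) (by omega) (by omega) d h with h | h
  · exact Or.inl h
  · right
    have e : ((((1 + 1 + 1) / 2 : ℕ) : ℤ) - ((1 : ℕ) : ℤ) - ((1 : ℕ) : ℤ) - ((n - 1 - 1 + 1) / 2 : ℕ) : ℤ)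
      = (n / 2 : ℕ) - n := by omega
    rw [h, e]
    simp only [Int.cast_add, Int.cast_sub, Int.cast_neg, Int.cast_natCast, Int.cast_one]
    rw [ZMod.natCast_self]; ring

lemma rot_odd {k n : ℕ} [NeZero n] (hn5 : 5 ≤ n) (hk : 2 ≤ k) (hkn : k + 2 ≤ n)
    (hn : n % 2 = 1) (d : ZMod n) (h : Equiv.addRight d ∈ Stab (CDch k n)) :
    d = 0 := by
  rcases rot_nec (i := 1) (j := 1) hkn (by omega) (by omega) (by omega) (by omega) d h with h1 | h1
  · exact h1
  · obtain ⟨i, j, a1, a2, a3, a4, a5⟩ := exists_three hn5 hk hkn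
    rcases rot_nec hkn a1 a2 a3 a4 d h with h2 | h2
    · exact h2
    · have := cast_small _ _ (h1.symm.trans h2) (by omega) (by omega)
      omega

lemma refl_any {k n : ℕ} [NeZero n] (hn5 : 5 ≤ n) (hk : 2 ≤ k) (hkn : k + 2 ≤ n)
    (c : ZMod n) (h : Equiv.subLeft c ∈ Stab (CDch k n)) :
    (k % 2 = 1 ∧ c = (((k + 1) / 2 : ℕ) : ZMod n)) ∨
    ((n - k) % 2 = 1 ∧ c = 1 - ((n - k + 1) / 2 : ℕ)) := by
  have h1 := refl_nec (i := 1) (j := 1) hkn (by omega) (by omega) (by omega) (by omega) c h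
  obtain ⟨i, j, a1, a2, a3, a4, a5⟩ := exists_three hn5 hk hkn
  have h2 := refl_nec hkn a1 a2 a3 a4 c h
  have f1 : c = (((k + 1) / 2 : ℕ) : ZMod n) ↔ c = ((((k + 1) / 2 : ℕ) : ℤ) : ZMod n) := by
    simp only [Int.cast_add, Int.cast_sub, Int.cast_neg, Int.cast_natCast, Int.cast_one]
  have f2 : c = 1 - ((n - k + 1) / 2 : ℕ) ↔ c = ((1 - ((n - k + 1) / 2 : ℕ) : ℤ) : ZMod n) := by
    simp only [Int.cast_add, Int.cast_sub, Int.cast_neg, Int.cast_natCast, Int.cast_one]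
  rw [f1, f2]
  by_cases p : k % 2 = 1
  · by_cases q : (n - k) % 2 = 1
    · rcases h1 with h1 | h1
      · left; refine ⟨p, h1.trans ?_⟩; congr 1; omega
      · right; refine ⟨q, h1.trans ?_⟩; congr 1; omega
    · rcases h1 with h1 | h1
      · left; refine ⟨p, h1.trans ?_⟩; congr 1; omega
      · rcases h2 with h2 | h2
        · left; refine ⟨p, h2.trans ?_⟩; congr 1; omega
        · have := cast_small _ _ (h1.symm.trans h2) (by omega) (by omega)
          omega
  · by_cases q : (n - k) % 2 = 1
    · rcases h1 with h1 | h1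
      · rcases h2 with h2 | h2
        · have := cast_small _ _ (h1.symm.trans h2) (by omega) (by omega)
          omega
        · right; refine ⟨q, h2.trans ?_⟩; congr 1; omega
      · right; refine ⟨q, h1.trans ?_⟩; congr 1; omega
    · exfalso
      rcases h1 with h1 | h1 <;> rcases h2 with h2 | h2 <;>
      · have := cast_small _ _ (h1.symm.trans h2) (by omega) (by omega)
        omega

lemma addRight_zero' {n : ℕ} : Equiv.addRight (0 : ZMod n) = 1 := by ext x; simp

/-- the stabilizer of the dual checkboard collection in `D_n`. -/
theorem dual_checkboard_stabilizer
    (n k : ℕ) (hn : 5 ≤ n) (hk : 2 ≤ k) (hkn : k ≤ n - 2) :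
    (k % 2 = 0 → n % 2 = 0 →
      {ρ : Equiv.Perm (ZMod n) | ρ ∈ dihedral n ∧ (CDch k n).image (fun I => I.image ρ) = CDch k n}
        = ↑(Subgroup.closure {(Equiv.addRight (1 : ZMod n)) ^ (n / 2)})) ∧
    (k % 2 = 1 → n % 2 = 0 →
      {ρ : Equiv.Perm (ZMod n) | ρ ∈ dihedral n ∧ (CDch k n).image (fun I => I.image ρ) = CDch k n}
        = ↑(Subgroup.closure {(Equiv.addRight (1 : ZMod n)) ^ (n / 2),
            (Equiv.addRight (1 : ZMod n)) ^ k * Equiv.subLeft ((((k - 1) * (n - 1)) / 2 : ℕ) : ZMod n)})) ∧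
    (n % 2 = 1 →
      {ρ : Equiv.Perm (ZMod n) | ρ ∈ dihedral n ∧ (CDch k n).image (fun I => I.image ρ) = CDch k n}
        = ↑(Subgroup.closure
            {(Equiv.addRight (1 : ZMod n)) ^ k * Equiv.subLeft ((((k - 1) * (n - 1)) / 2 : ℕ) : ZMod n)})) := by
  have : NeZero n := ⟨by omega⟩
  have hkn' : k + 2 ≤ n := by omega
  have hS : {ρ : Equiv.Perm (ZMod n) | ρ ∈ dihedral n ∧
      (CDch k n).image (fun I => I.image ρ) = CDch k n} = (Stab (CDch k n) : Set _) := rfl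
  rw [hS]
  simp only [pow_mul_sub, SetLike.coe_set_eq]
  simp only [addRight_pow']
  refine ⟨fun hk2 hn2 => ?_, fun hk2 hn2 => ?_, fun hn2 => ?_⟩
  · apply le_antisymm
    · intro ρ h
      rcases dihedral_cases ρ h.1 with ⟨d, rfl⟩ | ⟨c, rfl⟩
      · rcases rot_even hk hkn' hn2 d h with rfl | rfl
        · rw [addRight_zero']; exact one_mem _
        · exact Subgroup.subset_closure (by simp)
      · have := refl_any hn hk hkn' c h
        omega
    · rw [Subgroup.closure_le]
      rintro x rfl
      exact half_stab (by omega) hn2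
  · rw [c0_odd (by omega) hk2]
    apply le_antisymm
    · intro ρ h
      rcases dihedral_cases ρ h.1 with ⟨d, rfl⟩ | ⟨c, rfl⟩
      · rcases rot_even hk hkn' hn2 d h with rfl | rfl
        · rw [addRight_zero']; exact one_mem _
        · exact Subgroup.subset_closure (by simp)
      · rcases refl_any hn hk hkn' c h with ⟨_, rfl⟩ | ⟨_, rfl⟩
        · exact Subgroup.subset_closure (by simp)
        · have e : Equiv.subLeft (1 - ((n - k + 1) / 2 : ℕ) : ZMod n) =
              Equiv.addRight ((n / 2 : ℕ) : ZMod n) * Equiv.subLeft (((k + 1) / 2 : ℕ) : ZMod n) := by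
            have e1 : (1 : ℤ) - ((n - k + 1) / 2 : ℕ) + n = ((k + 1) / 2 : ℕ) + (n / 2 : ℕ) := by omega
            have e2 := congrArg (Int.cast : ℤ → ZMod n) e1
            have e3 : (n : ZMod n) = 0 := ZMod.natCast_self n
            simp only [Int.cast_add, Int.cast_sub, Int.cast_neg, Int.cast_natCast, Int.cast_one] at e2
            ext x
            simp only [Equiv.subLeft_apply, Equiv.Perm.mul_apply, Equiv.coe_addRight]
            linear_combination e2 - e3
          rw [e]
          exact mul_mem (Subgroup.subset_closure (by simp)) (Subgroup.subset_closure (by simp))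
    · rw [Subgroup.closure_le]
      rintro x (rfl | rfl)
      · exact half_stab (by omega) hn2
      · exact refl_stab_odd (by omega) hk2
  · have hle : ∀ c' : ZMod n, Equiv.subLeft c' ∈ Stab (CDch k n) →
        (∀ c, Equiv.subLeft c ∈ Stab (CDch k n) → c = c') →
        Stab (CDch k n) = Subgroup.closure {Equiv.subLeft c'} := by
      intro c' h1 h2
      apply le_antisymm
      · intro ρ h
        rcases dihedral_cases ρ h.1 with ⟨d, rfl⟩ | ⟨c, rfl⟩
        · rw [rot_odd hn hk hkn' hn2 d h, addRight_zero']; exact one_mem _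
        · rw [h2 c h]; exact Subgroup.subset_closure (by simp)
      · rw [Subgroup.closure_le]
        rintro x rfl
        exact h1
    rcases Nat.mod_two_eq_zero_or_one k with hk2 | hk2
    · rw [c0_even (by omega) (by omega) hk2 hn2]
      refine hle _ (refl_stab_even (by omega) (by omega)) fun c h => ?_
      rcases refl_any hn hk hkn' c h with ⟨h1, _⟩ | ⟨_, h1⟩
      · omega
      · exact h1
    · rw [c0_odd (by omega) hk2]
      refine hle _ (refl_stab_odd (by omega) hk2) fun c h => ?_
      rcases refl_any hn hk hkn' c h with ⟨_, h1⟩ | ⟨h1, _⟩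
      · exact h1
      · omega
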